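/- Let U ⊆ ℂ be open and let f : U → ℂ be continuous. If f is complex differentiable at every point of U ∖ f⁻¹({0}), then f is analytic on all of U. -/

import Mathlib

open Set Filter Topology Metric Complex

lemma rado_max (f G : ℂ → ℂ) (hf : ContinuousOn f (closedBall 0 1))
    (hfd : ∀ z ∈ ball (0:ℂ) 1, f z ≠ 0 → DifferentiableAt ℂ f z)
    (hG : ContinuousOn G (closedBall 0 1))
    (hGd : ∀ z ∈ ball (0:ℂ) 1, f z ≠ 0 → DifferentiableAt ℂ G z)
    (δ : ℝ) (hδ : ∀ z ∈ sphere (0:ℂ) 1, (G z).re ≤ δ) :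
    ∀ z ∈ ball (0:ℂ) 1, f z ≠ 0 → (G z).re ≤ δ := by
  intro z hz hfz
  obtain ⟨M, hM⟩ := (isCompact_closedBall (0:ℂ) 1).exists_bound_of_continuousOn hf
  set Ω : Set ℂ := ball 0 1 ∩ f ⁻¹' {0}ᶜ with hΩ
  have hΩo : IsOpen Ω :=
    (hf.mono ball_subset_closedBall).isOpen_inter_preimage isOpen_ball isOpen_compl_singleton
  have hcl : closure Ω ⊆ closedBall 0 1 :=
    closure_minimal (inter_subset_left.trans ball_subset_closedBall) isClosed_closedBall
  have key : ∀ n : ℕ, ‖f z‖ * Real.exp (n * (G z).re) ≤ M * Real.exp (n * δ) := by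
    intro n
    have hd : DiffContOnCl ℂ (fun w => f w * Complex.exp (n * G w)) Ω := by
      refine ⟨fun w hw => ?_, ?_⟩
      · exact ((hfd w hw.1 hw.2).mul
          ((hGd w hw.1 hw.2).const_mul (n : ℂ)).cexp).differentiableWithinAt
      · exact (hf.mul (continuousOn_const.mul hG).cexp).mono hcl
    have hn : ∀ w, ‖f w * Complex.exp (n * G w)‖ = ‖f w‖ * Real.exp (n * (G w).re) := by
      intro w
      rw [norm_mul, Complex.norm_exp]
      simp
    have := Complex.norm_le_of_forall_mem_frontier_norm_le
      (isBounded_ball.subset inter_subset_left) hd (C := M * Real.exp (n * δ)) ?_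
      (subset_closure (⟨hz, hfz⟩ : z ∈ Ω))
    · simpa only [hn] using this
    · intro w hw
      have hwc := hcl hw.1
      have hM0 : 0 ≤ M := (norm_nonneg _).trans (hM w hwc)
      rw [hn]
      by_cases hb : w ∈ ball (0:ℂ) 1
      · have : f w = 0 := by
          by_contra h
          exact hw.2 (by rw [hΩo.interior_eq]; exact ⟨hb, h⟩)
        rw [this]
        simp
        positivity
      · have hs : w ∈ sphere (0:ℂ) 1 := by
          simp at hb hwc ⊢; linarith
        gcongr
        · exact hM w hwc
        · exact hδ w hs
  by_contra! hlt
  set x := (G z).re - δ with hx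
  have hx0 : 0 < x := by linarith
  have hf0 : 0 < ‖f z‖ := norm_pos_iff.2 hfz
  obtain ⟨n, hn⟩ := exists_nat_gt (M / (‖f z‖ * x))
  have h1 := key n
  have h2 : Real.exp (n * (G z).re) = Real.exp (n * x) * Real.exp (n * δ) := by
    rw [← Real.exp_add]; congr 1; rw [hx]; ring
  rw [h2, ← mul_assoc] at h1
  have h3 := le_of_mul_le_mul_right h1 (Real.exp_pos _)
  have h4 := Real.add_one_le_exp (n * x)
  rw [div_lt_iff₀ (by positivity)] at hn
  nlinarith

lemma rado_approx (φ : ℂ → ℂ) (hφ : ContinuousOn φ (sphere 0 1)) (δ : ℝ) (hδ : 0 < δ) :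
    ∃ A B : Polynomial ℂ, ∀ z ∈ sphere (0:ℂ) 1,
      ‖φ z - (A.eval z + starRingEnd ℂ (B.eval z))‖ ≤ δ := by
  have : Fact (0 < (1:ℝ)) := ⟨one_pos⟩
  let Φ : C(AddCircle (1:ℝ), ℂ) := ⟨fun x => φ (AddCircle.toCircle x), by
    refine hφ.comp_continuous ?_ ?_
    · exact continuous_induced_dom.comp AddCircle.continuous_toCircle
    · intro x
      rw [mem_sphere_zero_iff_norm]
      exact Circle.norm_coe _⟩
  have hΦ : Φ ∈ closure ((Submodule.span ℂ (range (@fourier 1))) : Set C(AddCircle (1:ℝ), ℂ)) := by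
    rw [← Submodule.topologicalClosure_coe, span_fourier_closure_eq_top]; trivial
  obtain ⟨p, hp, hd⟩ := Metric.mem_closure_iff.1 hΦ δ hδ
  have hp' : ∃ A B : Polynomial ℂ, ∀ x : AddCircle (1:ℝ),
      p x = A.eval (AddCircle.toCircle x : ℂ) +
        starRingEnd ℂ (B.eval (AddCircle.toCircle x : ℂ)) := by
    clear hd
    induction hp using Submodule.span_induction with
    | mem q hq =>
      obtain ⟨n, rfl⟩ := hq
      rcases n with n | n
      · refine ⟨Polynomial.X ^ n, 0, fun x => ?_⟩
        simp [fourier_apply, AddCircle.toCircle_nsmul]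
      · refine ⟨0, Polynomial.X ^ (n+1), fun x => ?_⟩
        rw [fourier_apply, AddCircle.toCircle_zsmul, zpow_negSucc, Circle.coe_inv_eq_conj]
        simp
    | zero => exact ⟨0, 0, by simp⟩
    | add q r _ _ hq hr =>
      obtain ⟨A, B, h⟩ := hq
      obtain ⟨A', B', h'⟩ := hr
      refine ⟨A + A', B + B', fun x => ?_⟩
      simp [h, h']; ring
    | smul c q _ hq =>
      obtain ⟨A, B, h⟩ := hq
      refine ⟨Polynomial.C c * A, Polynomial.C (starRingEnd ℂ c) * B, fun x => ?_⟩
      simp [h]; ring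
  obtain ⟨A, B, h⟩ := hp'
  refine ⟨A, B, fun z hz => ?_⟩
  obtain ⟨x, hx⟩ := (AddCircle.homeomorphCircle (one_ne_zero (α := ℝ))).surjective
    ⟨z, by simpa [Submonoid.unitSphere] using hz⟩
  rw [AddCircle.homeomorphCircle_apply] at hx
  have hx' : (AddCircle.toCircle x : ℂ) = z := by rw [hx]
  have := (ContinuousMap.dist_apply_le_dist (f := Φ) (g := p) x).trans hd.le
  rw [dist_eq_norm, h, hx'] at this
  simpa [Φ, hx'] using this

/-- Cauchy transform on the unit circle. -/
noncomputable def radoC (φ : ℂ → ℂ) (w : ℂ) : ℂ :=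
  (2 * Real.pi * I : ℂ)⁻¹ • ∮ z in C(0, 1), (z - w)⁻¹ • φ z

lemma radoC_analytic (φ : ℂ → ℂ) (hφ : ContinuousOn φ (sphere 0 1)) :
    AnalyticOnNhd ℂ (radoC φ) (ball 0 1) := by
  have h := hasFPowerSeriesOn_cauchy_integral (f := φ) (c := 0) (R := 1)
    (hφ.circleIntegrable (by simp)) one_pos
  have := h.analyticOnNhd
  intro z hz
  exact this z (by rw [Metric.eball_coe]; simpa using hz)

lemma radoC_le (φ ψ : ℂ → ℂ) (hφ : ContinuousOn φ (sphere 0 1)) (hψ : ContinuousOn ψ (sphere 0 1))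
    (δ : ℝ) (hδ : ∀ z ∈ sphere (0:ℂ) 1, ‖φ z - ψ z‖ ≤ δ) (w : ℂ) (hw : w ∈ ball (0:ℂ) 1) :
    ‖radoC φ w - radoC ψ w‖ ≤ (1 - ‖w‖)⁻¹ * δ := by
  have hw' : ‖w‖ < 1 := by simpa using hw
  have hk : ContinuousOn (fun z : ℂ => (z - w)⁻¹) (sphere 0 1) := by
    refine ContinuousOn.inv₀ (by fun_prop) fun z hz h => ?_
    rw [sub_eq_zero] at h
    subst h
    simp at hz; linarith
  have i1 : CircleIntegrable (fun z => (z - w)⁻¹ • φ z) 0 1 :=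
    (hk.smul hφ).circleIntegrable zero_le_one
  have i2 : CircleIntegrable (fun z => (z - w)⁻¹ • ψ z) 0 1 :=
    (hk.smul hψ).circleIntegrable zero_le_one
  unfold radoC
  rw [← smul_sub, ← circleIntegral.integral_sub i1 i2]
  refine (circleIntegral.norm_two_pi_i_inv_smul_integral_le_of_norm_le_const
    (C := (1 - ‖w‖)⁻¹ * δ) zero_le_one ?_).trans (by simp)
  intro z hz
  have hz' : ‖z‖ = 1 := by simpa using hz
  have hzw : 1 - ‖w‖ ≤ ‖z - w‖ := by rw [← hz']; exact norm_sub_norm_le z w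
  rw [← smul_sub, norm_smul, norm_inv]
  have := hδ z hz
  gcongr

lemma radoC_poly (A B : Polynomial ℂ) (w : ℂ) (hw : w ∈ ball (0:ℂ) 1) :
    radoC (fun z => A.eval z + starRingEnd ℂ (B.eval z)) w =
      A.eval w + starRingEnd ℂ (B.eval 0) := by
  have hw' : ‖w‖ < 1 := by simpa using hw
  have hne : ∀ z ∈ sphere (0:ℂ) 1, z - w ≠ 0 := by
    intro z hz h
    rw [sub_eq_zero] at h
    subst h
    simp at hz; linarith
  have hk : ContinuousOn (fun z : ℂ => (z - w)⁻¹) (sphere 0 1) :=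
    ContinuousOn.inv₀ (by fun_prop) hne
  have hA : ContinuousOn (fun z => A.eval z) (sphere (0:ℂ) 1) := A.continuous.continuousOn
  have hB : ContinuousOn (fun z => starRingEnd ℂ (B.eval z)) (sphere (0:ℂ) 1) :=
    (continuous_conj.comp B.continuous).continuousOn
  have i1 : CircleIntegrable (fun z => (z - w)⁻¹ • A.eval z) 0 1 :=
    (hk.smul hA).circleIntegrable zero_le_one
  have i2 : CircleIntegrable (fun z => (z - w)⁻¹ • starRingEnd ℂ (B.eval z)) 0 1 :=
    (hk.smul hB).circleIntegrable zero_le_one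
  unfold radoC
  simp_rw [smul_add]
  rw [circleIntegral.integral_add i1 i2, smul_add]
  congr 1
  · exact two_pi_I_inv_smul_circleIntegral_sub_inv_smul_of_differentiable_on_off_countable
      countable_empty hw A.continuous.continuousOn (fun x _ => A.differentiable x)
  · have hden : ∀ z ∈ closedBall (0:ℂ) 1, 1 - starRingEnd ℂ w * z ≠ 0 := by
      intro z hz h
      have h1 : ‖starRingEnd ℂ w * z‖ = 1 := by
        rw [← sub_eq_zero.1 h]; simp
      have hz' : ‖z‖ ≤ 1 := by simpa using hz
      rw [norm_mul, RCLike.norm_conj] at h1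
      nlinarith [norm_nonneg w, norm_nonneg z]
    have hcont : ContinuousOn (fun z => B.eval z / (1 - starRingEnd ℂ w * z)) (closedBall 0 1) :=
      B.continuous.continuousOn.div (by fun_prop) hden
    have h1 : Real.circleAverage (fun z => B.eval z / (1 - starRingEnd ℂ w * z)) 0 1 = B.eval 0 := by
      have := circleAverage_of_differentiable_on_off_countable
        (f := fun z => B.eval z / (1 - starRingEnd ℂ w * z)) (c := 0) (R := 1) countable_empty
        (by simpa using hcont) (by
          intro z hz
          simp only [abs_one, sdiff_empty] at hz
          exact (B.differentiable z).div (by fun_prop) (hden z (ball_subset_closedBall hz)))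
      simpa using this
    have h2 := (Complex.conjCLE : ℂ →L[ℝ] ℂ).circleAverage_comp_comm (c := 0) (R := 1)
      (f := fun z => B.eval z / (1 - starRingEnd ℂ w * z))
      ((hcont.mono sphere_subset_closedBall).circleIntegrable zero_le_one)
    rw [h1, Real.circleAverage_eq_circleIntegral one_ne_zero] at h2
    simp only [ContinuousLinearEquiv.coe_coe, Complex.conjCLE_apply] at h2
    rw [← h2]
    congr 1
    refine circleIntegral.integral_congr zero_le_one fun z hz => ?_
    have hz' : ‖z‖ = 1 := by simpa using hz
    have hz0 : z ≠ 0 := by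
      rintro rfl; simp at hz'
    have hc : starRingEnd ℂ z = z⁻¹ := (Complex.inv_eq_conj hz').symm
    have hzw := hne z hz
    simp [hc]
    have : 1 - w * z⁻¹ ≠ 0 := by
      intro h; apply hzw; field_simp at h; simpa using h
    field_simp

lemma rado_formula (f : ℂ → ℂ) (hf : ContinuousOn f (closedBall 0 1))
    (hfd : ∀ z ∈ ball (0:ℂ) 1, f z ≠ 0 → DifferentiableAt ℂ f z)
    (z : ℂ) (hz : z ∈ ball (0:ℂ) 1) (hfz : f z ≠ 0) :
    f z = radoC f z + starRingEnd ℂ (radoC (fun w => starRingEnd ℂ (f w)) z) - radoC f 0 := by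
  have hz' : ‖z‖ < 1 := by simpa using hz
  have hfs := hf.mono (sphere_subset_closedBall (x := (0:ℂ)) (ε := 1))
  set K := 1 + (1 - ‖z‖)⁻¹ + (1 - ‖z‖)⁻¹ + 1 with hK
  have hK0 : 0 < K := by
    have : 0 < (1 - ‖z‖)⁻¹ := inv_pos.2 (by linarith)
    positivity
  have key : ∀ δ > 0, ‖f z - (radoC f z + starRingEnd ℂ (radoC (fun w => starRingEnd ℂ (f w)) z)
      - radoC f 0)‖ ≤ K * δ := by
    intro δ hδ
    obtain ⟨A, B, hAB⟩ := rado_approx f hfs δ hδ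
    set h : ℂ → ℂ := fun z => A.eval z + starRingEnd ℂ (B.eval z) with hh
    have hhc : Continuous h := A.continuous.add (continuous_conj.comp B.continuous)
    -- step 1
    have s1 : ‖f z - h z‖ ≤ δ := by
      set d := f z - h z with hd
      set c := starRingEnd ℂ d with hc
      have hre : ∀ w, (c * f w - c * A.eval w - d * B.eval w).re = (c * (f w - h w)).re := by
        intro w
        simp [hh, hc]
        ring
      have := rado_max f (fun w => c * f w - c * A.eval w - d * B.eval w) hf hfd
        (((continuousOn_const.mul hf).sub (continuousOn_const.mul A.continuous.continuousOn)).sub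
          (continuousOn_const.mul B.continuous.continuousOn))
        (fun w hw hfw => (((hfd w hw hfw).const_mul c).sub ((A.differentiable w).const_mul c)).sub
          ((B.differentiable w).const_mul d)) (‖d‖ * δ) (by
            intro w hw
            rw [hre]
            refine (re_le_norm _).trans ?_
            rw [norm_mul, hc, RCLike.norm_conj]
            gcongr
            exact hAB w hw) z hz hfz
      rw [hre, ← hd, hc, mul_comm, Complex.mul_conj, ofReal_re, normSq_eq_norm_sq] at this
      rcases (norm_nonneg d).eq_or_lt with h0 | h0
      · rw [← h0]; exact hδ.le
      · exact le_of_mul_le_mul_left (by linarith [sq ‖d‖]) h0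
    have s2 := radoC_le f h hfs hhc.continuousOn δ hAB z hz
    have s3 := radoC_le (fun w => starRingEnd ℂ (f w)) (fun w => starRingEnd ℂ (h w))
      (continuous_conj.comp_continuousOn hfs) (continuous_conj.comp hhc).continuousOn δ (by
        intro w hw
        rw [← map_sub, RCLike.norm_conj]
        exact hAB w hw) z hz
    have s4 := radoC_le f h hfs hhc.continuousOn δ hAB 0 (by simp)
    have e2 : radoC h z = A.eval z + starRingEnd ℂ (B.eval 0) := radoC_poly A B z hz
    have e4 : radoC h 0 = A.eval 0 + starRingEnd ℂ (B.eval 0) := radoC_poly A B 0 (by simp)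
    have e3 : radoC (fun w => starRingEnd ℂ (h w)) z = B.eval z + starRingEnd ℂ (A.eval 0) := by
      rw [← radoC_poly B A z hz]
      congr 1
      funext w
      simp [hh, add_comm]
    have e : h z = radoC h z + starRingEnd ℂ (radoC (fun w => starRingEnd ℂ (h w)) z)
        - radoC h 0 := by
      rw [e2, e3, e4]; simp [hh]; ring
    rw [← RCLike.norm_conj, map_sub] at s3
    simp only [norm_zero, sub_zero, inv_one, one_mul] at s4
    calc _ = ‖(f z - h z) - (radoC f z - radoC h z) -
          (starRingEnd ℂ (radoC (fun w => starRingEnd ℂ (f w)) z) -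
            starRingEnd ℂ (radoC (fun w => starRingEnd ℂ (h w)) z)) +
          (radoC f 0 - radoC h 0)‖ := by congr 1; rw [e]; ring
      _ ≤ δ + (1 - ‖z‖)⁻¹ * δ + (1 - ‖z‖)⁻¹ * δ + δ := by
          refine (norm_add_le _ _).trans (add_le_add ((norm_sub_le _ _).trans
            (add_le_add ((norm_sub_le _ _).trans (add_le_add s1 s2)) s3)) s4)
      _ = K * δ := by rw [hK]; ring
  rw [← sub_eq_zero, ← norm_le_zero_iff]
  refine le_of_forall_pos_le_add fun ε hε => ?_
  have := key (ε / K) (by positivity)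
  rwa [mul_div_cancel₀ _ hK0.ne', ← zero_add ε] at this

/-- Removing a countable set from the unit disc leaves it preconnected. -/
lemma rado_preconn (S : Set ℂ) (hS : S.Countable) : IsPreconnected (ball (0:ℂ) 1 \ S) := by
  let φ : ℂ → ℂ := fun z => (Homeomorph.unitBall z : ℂ)
  have hφ : Continuous φ := continuous_subtype_val.comp Homeomorph.unitBall.continuous
  have hinj : Function.Injective φ :=
    Subtype.val_injective.comp Homeomorph.unitBall.injective
  have hc : (φ ⁻¹' S).Countable := hS.preimage hinj
  have h := (hc.isConnected_compl_of_one_lt_rank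
    (by rw [rank_real_complex]; exact Nat.one_lt_ofNat)).isPreconnected.image φ hφ.continuousOn
  convert h using 1
  ext w
  constructor
  · rintro ⟨hw, hwS⟩
    obtain ⟨v, hv⟩ := Homeomorph.unitBall.surjective (⟨w, hw⟩ : ball (0:ℂ) 1)
    have hv' : φ v = w := by simp only [φ, hv]
    exact ⟨v, by simpa [hv'] using hwS, hv'⟩
  · rintro ⟨v, hv, rfl⟩
    exact ⟨(Homeomorph.unitBall v).2, hv⟩

lemma rado_disc (f : ℂ → ℂ) (hf : ContinuousOn f (closedBall 0 1))
    (hfd : ∀ z ∈ ball (0:ℂ) 1, f z ≠ 0 → DifferentiableAt ℂ f z) :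
    AnalyticOnNhd ℂ f (ball 0 1) := by
  by_cases hne : ∃ z₀ ∈ ball (0:ℂ) 1, f z₀ ≠ 0
  swap
  · push Not at hne
    exact (analyticOnNhd_congr isOpen_ball (g := fun _ => (0:ℂ)) hne).2 analyticOnNhd_const
  obtain ⟨z₀, hz₀, hfz₀⟩ := hne
  have hfs := hf.mono (sphere_subset_closedBall (x := (0:ℂ)) (ε := 1))
  have hfb := hf.mono (ball_subset_closedBall (x := (0:ℂ)) (ε := 1))
  set B := radoC (fun w => starRingEnd ℂ (f w)) with hB
  have hBa : AnalyticOnNhd ℂ B (ball 0 1) := radoC_analytic _ (continuous_conj.comp_continuousOn hfs)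
  have hAa : AnalyticOnNhd ℂ (radoC f) (ball 0 1) := radoC_analytic _ hfs
  have hform := rado_formula f hf hfd
  have hΩo : IsOpen (ball (0:ℂ) 1 ∩ f ⁻¹' {0}ᶜ) :=
    hfb.isOpen_inter_preimage isOpen_ball isOpen_compl_singleton
  obtain ⟨r, hr, hsub⟩ := Metric.isOpen_iff.1 hΩo z₀ ⟨hz₀, hfz₀⟩
  set g : ℂ → ℂ := fun z => f z - radoC f z + radoC f 0 with hg
  have hgB : ∀ z ∈ ball z₀ r, g z = starRingEnd ℂ (B z) := by
    intro z hz
    have := hform z (hsub hz).1 (hsub hz).2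
    simp only [hg]
    rw [this]; ring
  have hfa : AnalyticOnNhd ℂ f (ball z₀ r) := DifferentiableOn.analyticOnNhd
    (fun z hz => (hfd z (hsub hz).1 (hsub hz).2).differentiableWithinAt) isOpen_ball
  have hga : AnalyticOnNhd ℂ g (ball z₀ r) :=
    (hfa.sub (hAa.mono fun z hz => (hsub hz).1)).add analyticOnNhd_const
  have hBr : AnalyticOnNhd ℂ B (ball z₀ r) := hBa.mono fun z hz => (hsub hz).1
  obtain ⟨c₁, hc₁⟩ := (hga.add hBr).eq_const_of_im_eq_const (c₀ := 0)
    (fun z hz => by simp [hgB z hz]) isOpen_ball (isConnected_ball hr)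
  obtain ⟨c₂, hc₂⟩ := (hga.sub hBr).eq_const_of_re_eq_const (c₀ := 0)
    (fun z hz => by simp [hgB z hz]) isOpen_ball (isConnected_ball hr)
  have hBc : EqOn B (fun _ => (c₁ - c₂) / 2) (ball 0 1) := by
    refine hBa.eqOn_of_preconnected_of_eventuallyEq analyticOnNhd_const isPreconnected_ball hz₀ ?_
    filter_upwards [ball_mem_nhds z₀ hr] with z hz
    rw [← hc₁ z hz, ← hc₂ z hz]
    simp
  -- the holomorphic function agreeing with `f` off the zero set
  set F : ℂ → ℂ := fun z => radoC f z + (starRingEnd ℂ ((c₁ - c₂) / 2) - radoC f 0) with hF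
  have hFa : AnalyticOnNhd ℂ F (ball 0 1) := hAa.add analyticOnNhd_const
  have hFf : ∀ z ∈ ball (0:ℂ) 1, f z ≠ 0 → f z = F z := by
    intro z hz hfz
    rw [hform z hz hfz, ← hB, hBc hz, hF]; ring
  refine (analyticOnNhd_congr isOpen_ball (g := F) ?_).2 hFa
  rcases hFa.eqOn_zero_or_eventually_ne_zero_of_preconnected isPreconnected_ball with h0 | h0
  · exact absurd ((hFf z₀ hz₀ hfz₀).trans (h0 hz₀)) hfz₀
  set S : Set ℂ := {z | F z = 0} ∩ ball 0 1 with hS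
  have hSc : S.Countable := by
    have hd : IsDiscrete S := isDiscrete_of_codiscreteWithin (s := {z | F z = 0}) h0
    exact (HereditarilyLindelofSpace.isLindelof S).countable_of_isDiscrete hd
  have hV := rado_preconn S hSc
  have hSm : ∀ z ∈ ball (0:ℂ) 1 \ S, F z ≠ 0 := fun z hz h => hz.2 ⟨h, hz.1⟩
  have hu2 : IsOpen (ball (0:ℂ) 1 ∩ (fun z => f z - F z) ⁻¹' {0}ᶜ) :=
    (hfb.sub hFa.continuousOn).isOpen_inter_preimage isOpen_ball isOpen_compl_singleton
  have hall : ball (0:ℂ) 1 \ S ⊆ ball (0:ℂ) 1 ∩ f ⁻¹' {0}ᶜ := by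
    refine hV.subset_left_of_subset_union hΩo hu2 ?_ ?_ ?_
    · rw [Set.disjoint_left]
      rintro z ⟨h1, h2⟩ ⟨_, h3⟩
      exact h3 (sub_eq_zero.2 (hFf z h1 h2))
    · intro z hz
      by_cases h : f z = 0
      · right
        refine ⟨hz.1, ?_⟩
        have := hSm z hz
        simpa [h] using this
      · exact Or.inl ⟨hz.1, h⟩
    · refine ⟨z₀, ⟨hz₀, fun h => hfz₀ ((hFf z₀ hz₀ hfz₀).trans h.1)⟩, hz₀, hfz₀⟩
  intro z hz
  by_cases h : f z = 0
  · by_contra hne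
    have : F z ≠ 0 := fun h' => hne (h.trans h'.symm)
    exact (hall ⟨hz, fun h' => this h'.1⟩).2 h
  · exact hFf z hz h

/-- The Radó-type removable-singularity statement used in the proof of Theorem 1.2: a
continuous function on an open set `U ⊆ ℂ` that is complex differentiable away from its
zero set is analytic on all of `U`. -/
theorem rado_removable_singularity (U : Set ℂ) (hU : IsOpen U) (f : ℂ → ℂ)
    (hf : ContinuousOn f U)
    (hdiff : ∀ z ∈ U, f z ≠ 0 → DifferentiableAt ℂ f z) :
    AnalyticOnNhd ℂ f U := by
  intro a ha
  obtain ⟨r, hr, hsub⟩ := Metric.nhds_basis_closedBall.mem_iff.1 (hU.mem_nhds ha)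
  have hr' : (r : ℂ) ≠ 0 := by exact_mod_cast hr.ne'
  have hmaps : ∀ w ∈ closedBall (0:ℂ) 1, a + r * w ∈ U := by
    intro w hw
    apply hsub
    have : ‖w‖ ≤ 1 := by simpa using hw
    simp [abs_of_pos hr]
    nlinarith
  have h := rado_disc (fun w => f (a + r * w))
    (hf.comp (by fun_prop) hmaps)
    (fun w hw hfw => by
      have := hdiff _ (hmaps w (ball_subset_closedBall hw)) hfw
      exact this.comp w (by fun_prop)) 0 (by simp)
  have hl : AnalyticAt ℂ (fun z : ℂ => (z - a) / r) a := by fun_prop (disch := exact hr')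
  have h2 := AnalyticAt.comp_of_eq (f := fun z : ℂ => (z - a) / r) h hl (by simp)
  convert h2 using 1
  funext z
  simp [mul_div_cancel₀ _ hr']
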